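/- Let (ρ_h^k)_{k∈ℕ} solve the constrained minimizing movement scheme ρᵏ = argmin_{ρ∈M^{ℓ(kh)}} (½W₂²(ρ^{k-1},ρ) + hF(ρ)) under the stated growth assumptions on H and with Lipschitz ℓ. Then for every test function ζ ∈ C_c^∞(ℝ) and every k ∈ ℕ one has the estimate |∫(ρ_h^k − ρ_h^{k-1})/h · ζ dx + ∫((H'(x) − σ_h^k)∂_x ζ − ∂_{xx}ζ) ρ_h^k dx| ≤ (sup_ℝ |∂_{xx}ζ|/2) · (1/h) W₂²(ρ_h^{k-1}, ρ_h^k), where the discrete Lagrange multiplier equals σ_h^k = ∫H'(x)ρ_h^k(x)dx + (1/h)∫(ρ_h^k(x) − ρ_h^{k-1}(x)) x dx. -/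

import Mathlib

open MeasureTheory Real Filter

noncomputable section

/-- An (a.e. defined) probability density on `ℝ` with finite second moment. -/
def IsP2 (ρ : ℝ → ℝ) : Prop :=
  (∀ x, 0 ≤ ρ x) ∧ MeasureTheory.Integrable ρ ∧ (∫ x, ρ x) = 1 ∧
    MeasureTheory.Integrable (fun x => x ^ 2 * ρ x)

/-- First moment. -/
def M1 (ρ : ℝ → ℝ) : ℝ := ∫ x, x * ρ x

/-- Second moment. -/
def M2 (ρ : ℝ → ℝ) : ℝ := ∫ x, x ^ 2 * ρ x

/-- The constrained manifold `M^ℓ` of probability densities with first moment `ℓ`. -/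
def Mset (l : ℝ) : Set (ℝ → ℝ) := {ρ | IsP2 ρ ∧ M1 ρ = l}

/-- The measure with density `ρ` with respect to Lebesgue measure. -/
def densMeasure (ρ : ℝ → ℝ) : Measure ℝ :=
  MeasureTheory.volume.withDensity fun x => ENNReal.ofReal (ρ x)

/-- `pl` is a coupling of the densities `ρ₀` and `ρ₁`. -/
def IsCoupling (pl : Measure (ℝ × ℝ)) (ρ₀ ρ₁ : ℝ → ℝ) : Prop :=
  pl.map Prod.fst = densMeasure ρ₀ ∧ pl.map Prod.snd = densMeasure ρ₁

/-- Squared 2-Wasserstein distance between two densities. -/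
def W2sq (ρ₀ ρ₁ : ℝ → ℝ) : ℝ :=
  sInf {c : ℝ | ∃ pl : Measure (ℝ × ℝ), IsCoupling pl ρ₀ ρ₁ ∧
    c = ∫ p : ℝ × ℝ, (p.1 - p.2) ^ 2 ∂pl}

/-- The free energy `F(ρ) = ∫ ρ log ρ + ∫ H ρ + log Z₀`, `Z₀ = ∫ exp (-H)`. -/
def FreeEnergy (H ρ : ℝ → ℝ) : ℝ :=
  (∫ x, ρ x * Real.log (ρ x)) + (∫ x, H x * ρ x) + Real.log (∫ x, Real.exp (-H x))

/-- Finiteness of the free energy: both the entropy and potential integrands are integrable. -/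
def FiniteFreeEnergy (H ρ : ℝ → ℝ) : Prop :=
  MeasureTheory.Integrable (fun x => ρ x * Real.log (ρ x)) ∧
  MeasureTheory.Integrable (fun x => H x * ρ x)

/-- Growth assumptions on the potential `H` (Assumption 3.1). -/
def GrowthAssumptions (H : ℝ → ℝ) (C : ℝ) : Prop :=
  ContDiff ℝ 3 H ∧ (∀ x, 0 ≤ H x) ∧ 0 < C ∧
  (∀ x, H x ≤ C * (1 + |x| ^ 2)) ∧
  (∀ x, |deriv H x| ≤ C * (1 + |x|)) ∧
  (∀ x, |deriv (deriv H) x| ≤ C) ∧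
  (∀ x, |deriv (deriv (deriv H)) x| ≤ C / (1 + |x|))

/-- `ℓ ∈ W^{1,∞}(ℝ₊;ℝ)`: Lipschitz and bounded on `[0,∞)`. -/
def LipschitzBoundedOnNonneg (l : ℝ → ℝ) : Prop :=
  (∃ L : NNReal, LipschitzOnWith L l (Set.Ici 0)) ∧ ∃ B : ℝ, ∀ t ≥ (0:ℝ), |l t| ≤ B

/-- The functional minimized at each step of the scheme. -/
def SchemeObjective (H : ℝ → ℝ) (h : ℝ) (ρprev ρ : ℝ → ℝ) : ℝ :=
  W2sq ρprev ρ / 2 + h * FreeEnergy H ρ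

/-- `ρs` solves the constrained minimizing movement (implicit Euler) scheme with time step `h`. -/
def SolvesScheme (H l : ℝ → ℝ) (h : ℝ) (ρ0 : ℝ → ℝ) (ρs : ℕ → ℝ → ℝ) : Prop :=
  ρs 0 = ρ0 ∧ ∀ k : ℕ, 1 ≤ k →
    ρs k ∈ Mset (l (k * h)) ∧
    ∀ ρ ∈ Mset (l (k * h)),
      SchemeObjective H h (ρs (k - 1)) (ρs k) ≤ SchemeObjective H h (ρs (k - 1)) ρ

/-- The discrete Lagrange multiplier `σ_h^k`. -/
def discreteSigma (H : ℝ → ℝ) (h : ℝ) (ρs : ℕ → ℝ → ℝ) (k : ℕ) : ℝ :=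
  (∫ x, deriv H x * ρs k x) + (1 / h) * ∫ x, (ρs k x - ρs (k - 1) x) * x

/-!
Couple `ρ₀ = ρ_h^{k-1}` and `ρ₁ = ρ_h^k` by an optimal plan `(X, Y)`. Since `H` has Lipschitz
derivative, displacing `Y` by `s g(Y)`, with `g(Y)` centred so that the mean is preserved, changes
the transport and potential energies by `s E[(Y - X + h H'(Y)) g(Y)] + O(s²)`, and the entropy by
`-s E[g'(Y)] + O(s²)`. Minimality in both directions of `s` gives the Euler-Lagrange equation, in
which the centring produces the multiplier `σ`. With `g = ζ'` it turns `h` times the left-hand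
side of the estimate into the mean Taylor remainder of `ζ` at `Y`, at most `sup |ζ''| / 2 * W₂²`.

This argument needs the entropy of `ρ₁` to be finite, which does not follow from minimality at once
because an infinite entropy has the junk value `0`. If it were infinite, a competitor could be made
free of entropy, so that `ρ₁` would minimize the transport and potential energies over all laws
with its mean. Then `X = Y + h H'(Y) - c`, a Lipschitz function of `Y`, and the entropy of `ρ₁`
would be controlled by that of `ρ₀`.
-/

section OptimalPlan

lemma lowerSemicontinuous_lintegral_of_continuous {E : Type*} [TopologicalSpace E]
    [MeasurableSpace E] [OpensMeasurableSpace E] {c : E → NNReal} (hc : Continuous c) :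
    LowerSemicontinuous fun γ : ProbabilityMeasure E => ∫⁻ x, c x ∂(γ : Measure E) := by
  have truncation (γ : ProbabilityMeasure E) :
      ∫⁻ x, c x ∂(γ : Measure E) = ⨆ n : ℕ, ∫⁻ x, (min (c x) n : NNReal) ∂(γ : Measure E) := by
    rw [← lintegral_iSup (fun n => by fun_prop) fun m n hmn x => by dsimp only; gcongr]
    refine lintegral_congr fun x =>
      le_antisymm ?_ (iSup_le fun n => ENNReal.coe_le_coe.2 (min_le_left _ _))
    obtain ⟨n, hn⟩ := exists_nat_ge (c x)
    exact le_iSup_of_le n (by rw [min_eq_left hn])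
  simp_rw [truncation]
  refine lowerSemicontinuous_iSup fun n => Continuous.lowerSemicontinuous ?_
  have bounded (x y : E) : dist (min (c x) n) (min (c y) n) ≤ n := by
    rw [NNReal.dist_eq, ← NNReal.coe_natCast n]
    exact abs_sub_le_of_nonneg_of_le (NNReal.coe_nonneg _) (NNReal.coe_le_coe.2 (min_le_right _ _))
      (NNReal.coe_nonneg _) (NNReal.coe_le_coe.2 (min_le_right _ _))
  exact ProbabilityMeasure.continuous_lintegral_boundedContinuousFunction
    (.mkOfBound ⟨fun x => min (c x) n, by fun_prop⟩ n bounded)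

variable {E F : Type*} [TopologicalSpace E] [MeasurableSpace E] [PolishSpace E] [BorelSpace E]
  [TopologicalSpace F] [MeasurableSpace F] [PolishSpace F] [BorelSpace F]

lemma isCompact_setOf_fst_eq_snd_eq (μ : ProbabilityMeasure E) (ν : ProbabilityMeasure F) :
    IsCompact {γ : ProbabilityMeasure (E × F) |
      (γ : Measure (E × F)).fst = μ ∧ (γ : Measure (E × F)).snd = ν} := by
  set S := {γ : ProbabilityMeasure (E × F) |
    (γ : Measure (E × F)).fst = μ ∧ (γ : Measure (E × F)).snd = ν}
  have tight : IsTightMeasureSet {(γ : Measure (E × F)) | γ ∈ S} :=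
    .prodMk (isTightMeasureSet_singleton (μ := (μ : Measure E)) |>.subset (by grind))
      (isTightMeasureSet_singleton (μ := (ν : Measure F)) |>.subset (by grind))
  have closed : IsClosed S := by
    have eq_inter : S = (fun γ => γ.map measurable_fst.aemeasurable) ⁻¹' {μ} ∩
        (fun γ => γ.map measurable_snd.aemeasurable) ⁻¹' {ν} := by
      ext γ
      exact and_congr
        (ProbabilityMeasure.toMeasure_injective.eq_iff (a := γ.map measurable_fst.aemeasurable))
        (ProbabilityMeasure.toMeasure_injective.eq_iff (a := γ.map measurable_snd.aemeasurable))
    rw [eq_inter]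
    exact (isClosed_singleton.preimage (ProbabilityMeasure.continuous_map continuous_fst)).inter
      (isClosed_singleton.preimage (ProbabilityMeasure.continuous_map continuous_snd))
  rw [← closed.closure_eq]
  exact isCompact_closure_of_isTightMeasureSet tight

lemma exists_isMinOn_lintegral_cost {c : E × F → NNReal} (hc : Continuous c)
    (μ : ProbabilityMeasure E) (ν : ProbabilityMeasure F) :
    ∃ γ : ProbabilityMeasure (E × F), (γ : Measure (E × F)).fst = μ ∧
      (γ : Measure (E × F)).snd = ν ∧
      ∀ γ' : ProbabilityMeasure (E × F), (γ' : Measure (E × F)).fst = μ →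
        (γ' : Measure (E × F)).snd = ν →
        ∫⁻ p, c p ∂(γ : Measure (E × F)) ≤ ∫⁻ p, c p ∂(γ' : Measure (E × F)) := by
  have nonempty : {γ : ProbabilityMeasure (E × F) |
      (γ : Measure (E × F)).fst = μ ∧ (γ : Measure (E × F)).snd = ν}.Nonempty :=
    ⟨μ.prod ν, by simp, by simp⟩
  obtain ⟨γ, ⟨hfst, hsnd⟩, hmin⟩ :=
    ((lowerSemicontinuous_lintegral_of_continuous hc).lowerSemicontinuousOn _).exists_isMinOn
      nonempty (isCompact_setOf_fst_eq_snd_eq μ ν)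
  exact ⟨γ, hfst, hsnd, fun γ' h h' => hmin ⟨h, h'⟩⟩

end OptimalPlan

section LipschitzDerivative

variable {f : ℝ → ℝ} {L : NNReal}

lemma abs_sub_sub_deriv_mul_le (hf : Differentiable ℝ f) (hf' : LipschitzWith L (deriv f))
    (x y : ℝ) : |f y - f x - deriv f x * (y - x)| ≤ L / 2 * (y - x) ^ 2 := by
  have remainder_deriv (t : ℝ) : HasDerivAt
      (fun t => f (x + t * (y - x)) - f x - t * (deriv f x * (y - x)))
      ((deriv f (x + t * (y - x)) - deriv f x) * (y - x)) t := by
    have line : HasDerivAt (fun t => x + t * (y - x)) (y - x) t := by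
      simpa using ((hasDerivAt_id t).mul_const (y - x)).const_add x
    refine ((((hf _).hasDerivAt.comp t line).sub_const (f x)).sub
      ((hasDerivAt_id t).mul_const (deriv f x * (y - x)))).congr_deriv ?_
    ring
  have majorant_deriv (t : ℝ) : HasDerivAt (fun t => L / 2 * (y - x) ^ 2 * t ^ 2)
      (L * (y - x) ^ 2 * t) t := by
    refine ((hasDerivAt_pow 2 t).const_mul (L / 2 * (y - x) ^ 2)).congr_deriv ?_
    ring
  have bound (t : ℝ) (ht : t ∈ Set.Ico (0 : ℝ) 1) :
      ‖(deriv f (x + t * (y - x)) - deriv f x) * (y - x)‖ ≤ L * (y - x) ^ 2 * t := by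
    have lip := hf'.dist_le_mul (x + t * (y - x)) x
    rw [Real.dist_eq, Real.dist_eq, add_sub_cancel_left, abs_mul, abs_of_nonneg ht.1] at lip
    rw [Real.norm_eq_abs, abs_mul, ← sq_abs (y - x)]
    nlinarith [abs_nonneg (y - x)]
  simpa using image_norm_le_of_norm_deriv_right_le_deriv_boundary
    (fun t _ => (remainder_deriv t).continuousAt.continuousWithinAt)
    (fun t _ => (remainder_deriv t).hasDerivWithinAt) (by simp) majorant_deriv bound
    (Set.right_mem_Icc.2 zero_le_one)

variable {Ω : Type*} [MeasurableSpace Ω] {P : Measure Ω} [IsFiniteMeasure P] {X : Ω → ℝ}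

lemma memLp_comp_of_lipschitz {p : ENNReal} (hf : LipschitzWith L f) (hX : MemLp X p P) :
    MemLp (fun ω => f (X ω)) p P := by
  have lipschitz_sub : LipschitzWith L fun x => f x - f 0 := by
    simpa using hf.sub (LipschitzWith.const (f 0))
  exact ((lipschitz_sub.comp_memLp (sub_self _) hX).add (memLp_const (f 0))).ae_eq
    (ae_of_all _ fun ω => sub_add_cancel _ _)

lemma integrable_comp_of_lipschitz_deriv (hf : Differentiable ℝ f)
    (hf' : LipschitzWith L (deriv f)) (hX : MemLp X 2 P) : Integrable (fun ω => f (X ω)) P := by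
  have affine : Integrable (fun ω => f 0 + deriv f 0 * X ω) P :=
    (integrable_const _).add ((hX.integrable one_le_two).const_mul _)
  have remainder : Integrable (fun ω => f (X ω) - f 0 - deriv f 0 * (X ω - 0)) P := by
    refine (hX.integrable_sq.const_mul (L / 2)).mono' ?_ (ae_of_all _ fun ω => ?_)
    · have := hf.continuous
      have := hX.aestronglyMeasurable
      fun_prop
    · simpa using abs_sub_sub_deriv_mul_le hf hf' 0 (X ω)
  refine (remainder.add affine).congr (ae_of_all _ fun ω => ?_)
  simp only [Pi.add_apply]
  ring

end LipschitzDerivative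

section Density

open ProbabilityTheory

variable {ρ : ℝ → ℝ}

lemma densMeasure_absolutelyContinuous (ρ : ℝ → ℝ) : densMeasure ρ ≪ volume :=
  withDensity_absolutelyContinuous _ _

namespace IsP2

lemma aemeasurable_ofReal (hρ : IsP2 ρ) : AEMeasurable fun x => ENNReal.ofReal (ρ x) :=
  hρ.2.1.aestronglyMeasurable.aemeasurable.ennreal_ofReal

lemma integral_densMeasure (hρ : IsP2 ρ) (f : ℝ → ℝ) :
    ∫ x, f x ∂densMeasure ρ = ∫ x, f x * ρ x := by
  rw [densMeasure, integral_withDensity_eq_integral_toReal_smul₀ hρ.aemeasurable_ofReal (by simp)]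
  simp only [ENNReal.toReal_ofReal (hρ.1 _), smul_eq_mul, mul_comm]

lemma integrable_densMeasure_iff (hρ : IsP2 ρ) {f : ℝ → ℝ} :
    Integrable f (densMeasure ρ) ↔ Integrable fun x => f x * ρ x := by
  rw [densMeasure, integrable_withDensity_iff_integrable_smul₀' hρ.aemeasurable_ofReal (by simp)]
  simp only [ENNReal.toReal_ofReal (hρ.1 _), smul_eq_mul, mul_comm]

lemma integral_id_densMeasure (hρ : IsP2 ρ) : ∫ x, x ∂densMeasure ρ = M1 ρ :=
  hρ.integral_densMeasure fun x => x

lemma isProbabilityMeasure (hρ : IsP2 ρ) : IsProbabilityMeasure (densMeasure ρ) := by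
  refine ⟨?_⟩
  rw [densMeasure, withDensity_apply _ .univ, Measure.restrict_univ,
    ← ofReal_integral_eq_lintegral_ofReal hρ.2.1 (ae_of_all _ hρ.1), hρ.2.2.1, ENNReal.ofReal_one]

lemma memLp_id (hρ : IsP2 ρ) : MemLp (fun x => x) 2 (densMeasure ρ) :=
  (memLp_two_iff_integrable_sq measurable_id.aestronglyMeasurable).2
    (hρ.integrable_densMeasure_iff.2 hρ.2.2.2)

variable {Ω : Type*} [MeasurableSpace Ω] {P : Measure Ω} {X : Ω → ℝ}

lemma memLp_of_hasLaw (hρ : IsP2 ρ) (hX : HasLaw X (densMeasure ρ) P) : MemLp X 2 P :=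
  (memLp_map_measure_iff aestronglyMeasurable_id hX.aemeasurable).1 (hX.map_eq ▸ hρ.memLp_id)

lemma integral_comp_of_hasLaw (hρ : IsP2 ρ) (hX : HasLaw X (densMeasure ρ) P) {f : ℝ → ℝ}
    (hf : AEStronglyMeasurable f (densMeasure ρ)) : ∫ ω, f (X ω) ∂P = ∫ x, f x * ρ x :=
  (hX.integral_comp hf).trans (hρ.integral_densMeasure f)

end IsP2

lemma exists_isP2_densMeasure_eq {μ : Measure ℝ} [IsProbabilityMeasure μ] (hμ : μ ≪ volume)
    (hμ2 : MemLp id 2 μ) : ∃ ρ, IsP2 ρ ∧ Measurable ρ ∧ densMeasure ρ = μ := by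
  set ρ : ℝ → ℝ := fun x => (μ.rnDeriv volume x).toReal
  have hρm : Measurable ρ := (Measure.measurable_rnDeriv μ volume).ennreal_toReal
  have hρμ : densMeasure ρ = μ := by
    conv_rhs => rw [← Measure.withDensity_rnDeriv_eq μ volume hμ]
    refine withDensity_congr_ae ?_
    filter_upwards [μ.rnDeriv_lt_top volume] with x hx using ENNReal.ofReal_toReal hx.ne
  refine ⟨ρ, ⟨fun x => ENNReal.toReal_nonneg, Measure.integrable_toReal_rnDeriv, ?_, ?_⟩,
    hρm, hρμ⟩
  · simp [ρ, Measure.integral_toReal_rnDeriv hμ]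
  · have second_moment := hμ2.integrable_sq
    rw [← hρμ, densMeasure, integrable_withDensity_iff_integrable_smul' hρm.ennreal_ofReal
      (by simp)] at second_moment
    simpa [ENNReal.toReal_ofReal, ρ, mul_comm] using second_moment

end Density

section Wasserstein

open ProbabilityTheory

variable {ρ₀ ρ₁ : ℝ → ℝ}

lemma isCoupling_map_prodMk {Ω : Type*} [MeasurableSpace Ω] {P : Measure Ω} {X Y : Ω → ℝ}
    (hX : HasLaw X (densMeasure ρ₀) P) (hY : HasLaw Y (densMeasure ρ₁) P) :
    IsCoupling (P.map fun ω => (X ω, Y ω)) ρ₀ ρ₁ :=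
  ⟨(Measure.fst_map_prodMk₀ hY.aemeasurable).trans hX.map_eq,
    (Measure.snd_map_prodMk₀ hX.aemeasurable).trans hY.map_eq⟩

lemma W2sq_le_integral {Ω : Type*} [MeasurableSpace Ω] {P : Measure Ω} {X Y : Ω → ℝ}
    (hX : HasLaw X (densMeasure ρ₀) P) (hY : HasLaw Y (densMeasure ρ₁) P) :
    W2sq ρ₀ ρ₁ ≤ ∫ ω, (Y ω - X ω) ^ 2 ∂P := by
  have hXY : AEMeasurable (fun ω => (X ω, Y ω)) P := hX.aemeasurable.prodMk hY.aemeasurable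
  have hcost : AEStronglyMeasurable (fun p : ℝ × ℝ => (p.1 - p.2) ^ 2)
      (P.map fun ω => (X ω, Y ω)) := by fun_prop
  refine csInf_le ⟨0, ?_⟩ ⟨_, isCoupling_map_prodMk hX hY, ?_⟩
  · rintro _ ⟨γ, -, rfl⟩
    positivity
  · rw [integral_map hXY hcost]
    exact integral_congr_ae (ae_of_all _ fun ω => by ring)

/-- `γ` is an optimal transport plan between the densities `ρ₀` and `ρ₁` for the quadratic cost,
so that its two coordinates are random variables with laws `ρ₀` and `ρ₁` realising `W2sq`. -/
structure IsOptimalPlan (γ : Measure (ℝ × ℝ)) (ρ₀ ρ₁ : ℝ → ℝ) : Prop where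
  hasLaw_fst : HasLaw Prod.fst (densMeasure ρ₀) γ
  hasLaw_snd : HasLaw Prod.snd (densMeasure ρ₁) γ
  integral_eq : ∫ p, (p.2 - p.1) ^ 2 ∂γ = W2sq ρ₀ ρ₁

lemma exists_isOptimalPlan (h₀ : IsP2 ρ₀) (h₁ : IsP2 ρ₁) : ∃ γ, IsOptimalPlan γ ρ₀ ρ₁ := by
  have := h₀.isProbabilityMeasure
  have := h₁.isProbabilityMeasure
  obtain ⟨γ, hfst, hsnd, hmin⟩ := exists_isMinOn_lintegral_cost
    (c := fun p : ℝ × ℝ => ((p.2 - p.1) ^ 2).toNNReal) (by fun_prop)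
    ⟨densMeasure ρ₀, inferInstance⟩ ⟨densMeasure ρ₁, inferInstance⟩
  have hγ₀ : HasLaw Prod.fst (densMeasure ρ₀) (γ : Measure (ℝ × ℝ)) := ⟨by fun_prop, hfst⟩
  have hγ₁ : HasLaw Prod.snd (densMeasure ρ₁) (γ : Measure (ℝ × ℝ)) := ⟨by fun_prop, hsnd⟩
  refine ⟨γ, hγ₀, hγ₁, le_antisymm (le_csInf ⟨_, γ, ⟨hfst, hsnd⟩, rfl⟩ ?_)
    (W2sq_le_integral hγ₀ hγ₁)⟩
  rintro _ ⟨γ', hγ', rfl⟩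
  have hγ'₀ : HasLaw Prod.fst (densMeasure ρ₀) γ' := ⟨by fun_prop, hγ'.1⟩
  have hγ'₁ : HasLaw Prod.snd (densMeasure ρ₁) γ' := ⟨by fun_prop, hγ'.2⟩
  have := hγ'₀.isProbabilityMeasure
  have cost_eq_lintegral (η : Measure (ℝ × ℝ)) : ∫ p, (p.2 - p.1) ^ 2 ∂η =
      (∫⁻ p, ENNReal.ofReal ((p.2 - p.1) ^ 2) ∂η).toReal :=
    integral_eq_lintegral_of_nonneg_ae (ae_of_all _ fun _ => sq_nonneg _) (by fun_prop)
  have cost_lt_top : ∫⁻ p, ENNReal.ofReal ((p.2 - p.1) ^ 2) ∂γ' < ⊤ :=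
    ((h₁.memLp_of_hasLaw hγ'₁).sub (h₀.memLp_of_hasLaw hγ'₀)).integrable_sq.lintegral_lt_top
  simp_rw [← neg_sub (Prod.snd _), neg_sq, cost_eq_lintegral]
  exact ENNReal.toReal_mono cost_lt_top.ne (hmin ⟨γ', inferInstance⟩ hγ'.1 hγ'.2)

/-- The equal mixture of two densities, which moves a minimizer halfway towards a competitor. -/
def midDensity (f g : ℝ → ℝ) : ℝ → ℝ := fun x => (f x + g x) / 2

lemma integrable_mul_midDensity {f g φ : ℝ → ℝ} (hf : Integrable fun x => φ x * f x)
    (hg : Integrable fun x => φ x * g x) : Integrable fun x => φ x * midDensity f g x :=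
  ((hf.add hg).div_const 2).congr (ae_of_all _ fun x => by
    simp only [midDensity, Pi.add_apply]; ring)

lemma integral_mul_midDensity {f g φ : ℝ → ℝ} (hf : Integrable fun x => φ x * f x)
    (hg : Integrable fun x => φ x * g x) :
    ∫ x, φ x * midDensity f g x = ((∫ x, φ x * f x) + ∫ x, φ x * g x) / 2 := by
  rw [← integral_add hf hg, ← integral_div]
  exact integral_congr_ae (ae_of_all _ fun x => by simp only [midDensity]; ring)

variable {f g : ℝ → ℝ}

lemma IsP2.midDensity (hf : IsP2 f) (hg : IsP2 g) : IsP2 (midDensity f g) := by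
  have hf1 : Integrable fun x => 1 * f x := by simpa using hf.2.1
  have hg1 : Integrable fun x => 1 * g x := by simpa using hg.2.1
  refine ⟨fun x => div_nonneg (add_nonneg (hf.1 x) (hg.1 x)) two_pos.le, ?_, ?_,
    integrable_mul_midDensity hf.2.2.2 hg.2.2.2⟩
  · simpa using integrable_mul_midDensity hf1 hg1
  · simpa [hf.2.2.1, hg.2.2.1] using integral_mul_midDensity hf1 hg1

lemma densMeasure_midDensity (hf : IsP2 f) (hg : IsP2 g) :
    densMeasure (midDensity f g) =
      (2⁻¹ : ENNReal) • densMeasure f + (2⁻¹ : ENNReal) • densMeasure g := by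
  ext A hA
  simp only [densMeasure, Measure.add_apply, Measure.smul_apply, smul_eq_mul,
    withDensity_apply _ hA]
  rw [← mul_add, ← lintegral_add_left' hf.aemeasurable_ofReal.restrict,
    ← lintegral_const_mul' _ _ (by simp)]
  refine lintegral_congr fun x => ?_
  rw [midDensity, div_eq_inv_mul, ENNReal.ofReal_mul (by positivity),
    ENNReal.ofReal_add (hf.1 x) (hg.1 x), ENNReal.ofReal_inv_of_pos two_pos, ENNReal.ofReal_ofNat]

lemma W2sq_midDensity_le (h₀ : IsP2 ρ₀) (hf : IsP2 f) (hg : IsP2 g) :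
    W2sq ρ₀ (midDensity f g) ≤ (W2sq ρ₀ f + W2sq ρ₀ g) / 2 := by
  obtain ⟨γ, hγ⟩ := exists_isOptimalPlan h₀ hf
  obtain ⟨η, hη⟩ := exists_isOptimalPlan h₀ hg
  have hfst : HasLaw Prod.fst (densMeasure ρ₀) ((2⁻¹ : ENNReal) • γ + (2⁻¹ : ENNReal) • η) := by
    refine ⟨by fun_prop, ?_⟩
    rw [Measure.map_add _ _ measurable_fst, Measure.map_smul, Measure.map_smul,
      hγ.hasLaw_fst.map_eq, hη.hasLaw_fst.map_eq, ← add_smul, ENNReal.inv_two_add_inv_two, one_smul]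
  have hsnd : HasLaw Prod.snd (densMeasure (midDensity f g))
      ((2⁻¹ : ENNReal) • γ + (2⁻¹ : ENNReal) • η) := by
    refine ⟨by fun_prop, ?_⟩
    rw [Measure.map_add _ _ measurable_snd, Measure.map_smul, Measure.map_smul,
      hγ.hasLaw_snd.map_eq, hη.hasLaw_snd.map_eq, densMeasure_midDensity hf hg]
  have cost_integrable {θ : Measure (ℝ × ℝ)} {r : ℝ → ℝ} (hr : IsP2 r)
      (hθ : IsOptimalPlan θ ρ₀ r) :
      Integrable (fun p => (p.2 - p.1) ^ 2) ((2⁻¹ : ENNReal) • θ) :=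
    (((hr.memLp_of_hasLaw hθ.hasLaw_snd).sub
      (h₀.memLp_of_hasLaw hθ.hasLaw_fst)).integrable_sq).smul_measure (by simp)
  refine (W2sq_le_integral hfst hsnd).trans_eq ?_
  rw [integral_add_measure (cost_integrable hf hγ) (cost_integrable hg hη), integral_smul_measure,
    integral_smul_measure, hγ.integral_eq, hη.integral_eq]
  simp only [ENNReal.toReal_inv, ENNReal.toReal_ofNat, smul_eq_mul]
  ring

end Wasserstein

section Entropy

open ProbabilityTheory

/-- The entropy `∫ ρ log ρ` converges absolutely, so that the Bochner integral in `FreeEnergy` is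
its genuine value and not the junk value `0`. -/
def HasFiniteEntropy (ρ : ℝ → ℝ) : Prop := Integrable fun x => ρ x * log (ρ x)

variable {ρ ρ₀ : ℝ → ℝ}

lemma IsP2.hasFiniteEntropy_iff (hρ : IsP2 ρ) :
    HasFiniteEntropy ρ ↔ Integrable (fun x => log (ρ x)) (densMeasure ρ) := by
  simp only [HasFiniteEntropy, hρ.integrable_densMeasure_iff, mul_comm]

lemma IsP2.integral_log_densMeasure (hρ : IsP2 ρ) :
    ∫ x, log (ρ x) ∂densMeasure ρ = ∫ x, ρ x * log (ρ x) := by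
  simp only [hρ.integral_densMeasure, mul_comm]

lemma neg_mul_sub_exp_le_mul_log {t : ℝ} (ht : 0 ≤ t) (a : ℝ) :
    -a * t - exp (-a) ≤ t * log t := by
  rcases ht.eq_or_lt with rfl | ht
  · simpa using (exp_pos (-a)).le
  · have tangent := add_one_le_exp (-a - log t)
    rw [exp_sub, exp_log ht, le_div_iff₀ ht] at tangent
    nlinarith

lemma IsP2.hasFiniteEntropy_of_le (hρ : IsP2 ρ) {g : ℝ → ℝ} (hg : Integrable g)
    (hle : ∀ᵐ x, ρ x * log (ρ x) ≤ g x) : HasFiniteEntropy ρ := by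
  have lower : Integrable fun x => -(x ^ 2 * ρ x) - exp (-1 * x ^ 2) :=
    hρ.2.2.2.neg.sub (integrable_exp_neg_mul_sq one_pos)
  have measurable : AEStronglyMeasurable (fun x => ρ x * log (ρ x)) :=
    (continuous_mul_log.measurable.comp_aemeasurable
      hρ.2.1.aestronglyMeasurable.aemeasurable).aestronglyMeasurable
  refine integrable_of_le_of_le measurable (ae_of_all _ fun x => ?_) hle lower hg
  simpa using neg_mul_sub_exp_le_mul_log (hρ.1 x) (x ^ 2)

lemma mul_log_le_of_le_two_mul {t r : ℝ} (ht : 0 ≤ t) (htr : t ≤ 2 * r) :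
    t * log t ≤ 2 * |r * log r| + 2 * log 2 * r := by
  have hr : 0 ≤ r := by linarith
  have : 0 < log 2 := log_pos one_lt_two
  rcases le_total t 1 with h1 | h1
  · exact (mul_nonpos_of_nonneg_of_nonpos ht (log_nonpos ht h1)).trans (by positivity)
  · have log_le : log t ≤ log 2 + log r := by
      rw [← log_mul two_ne_zero (by linarith)]
      exact log_le_log (by linarith) htr
    have := mul_le_mul htr log_le (log_nonneg h1) (by linarith)
    nlinarith [le_abs_self (r * log r)]

lemma HasFiniteEntropy.of_midDensity {f : ℝ → ℝ} (hf : IsP2 f) (hρ : IsP2 ρ)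
    (hmid : HasFiniteEntropy (midDensity f ρ)) : HasFiniteEntropy ρ := by
  refine hρ.hasFiniteEntropy_of_le ((hmid.abs.const_mul 2).add
    ((hf.midDensity hρ).2.1.const_mul (2 * log 2))) (ae_of_all _ fun x => ?_)
  refine mul_log_le_of_le_two_mul (hρ.1 x) ?_
  have := hf.1 x
  rw [midDensity]
  linarith

lemma volume_image_le_of_lipschitz {K : NNReal} {G : ℝ → ℝ} (hG : LipschitzWith K G)
    (s : Set ℝ) : volume (G '' s) ≤ K * volume s := by
  simpa [hausdorffMeasure_real] using hG.hausdorffMeasure_image_le zero_le_one s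

lemma ae_le_mul_comp_of_map_withDensity_eq {K : NNReal} {G : ℝ → ℝ} (hG : LipschitzWith K G)
    {u v : ℝ → ENNReal} (hu : AEMeasurable u)
    (huv : (volume.withDensity u).map G = volume.withDensity v) :
    ∀ᵐ x, u x ≤ K * v (G x) := by
  have hGm : Measurable G := hG.continuous.measurable
  refine ae_le_of_forall_setLIntegral_le_of_sigmaFinite₀ hu fun s _ _ => ?_
  have restrict_le : volume.restrict (G '' s) ≤ K • (volume.restrict s).map G := by
    refine Measure.le_iff.2 fun t ht => ?_
    rw [Measure.smul_apply, Measure.map_apply hGm ht, Measure.restrict_apply ht,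
      Measure.restrict_apply (hGm ht), Set.inter_comm t, ← Set.image_inter_preimage,
      Set.inter_comm s]
    exact volume_image_le_of_lipschitz hG _
  calc ∫⁻ x in s, u x = volume.withDensity u s := (withDensity_apply' _ _).symm
    _ ≤ (volume.withDensity u).map G (G '' s) :=
        (measure_mono (Set.subset_preimage_image G s)).trans
          (Measure.le_map_apply hGm.aemeasurable _)
    _ = ∫⁻ y in G '' s, v y := by rw [huv, withDensity_apply' _ _]
    _ ≤ ∫⁻ y, v y ∂(K • (volume.restrict s).map G) := lintegral_mono' restrict_le le_rfl
    _ = K * ∫⁻ y, v y ∂((volume.restrict s).map G) := by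
        rw [lintegral_smul_measure, ENNReal.smul_def, smul_eq_mul]
    _ ≤ K * ∫⁻ x in s, v (G x) := mul_le_mul_right (lintegral_map_le v G) _
    _ ≤ ∫⁻ x in s, K * v (G x) := by
        rw [lintegral_const_mul' _ _ ENNReal.coe_ne_top]

lemma HasFiniteEntropy.of_hasLaw_lipschitz {K : NNReal} {G : ℝ → ℝ} (hG : LipschitzWith K G)
    (hρ : IsP2 ρ) (hρ₀ : IsP2 ρ₀) (hlaw : HasLaw G (densMeasure ρ₀) (densMeasure ρ))
    (hent : HasFiniteEntropy ρ₀) : HasFiniteEntropy ρ := by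
  have log_integrable : Integrable (fun x => |log (ρ₀ (G x))| + |log K|) (densMeasure ρ) := by
    have := hρ.isProbabilityMeasure
    refine Integrable.add ?_ (integrable_const _)
    have := (hρ₀.hasFiniteEntropy_iff.1 hent).abs
    rw [← hlaw.map_eq] at this
    exact this.comp_aemeasurable hlaw.aemeasurable
  refine hρ.hasFiniteEntropy_of_le (hρ.integrable_densMeasure_iff.1 log_integrable) ?_
  filter_upwards [ae_le_mul_comp_of_map_withDensity_eq hG hρ.aemeasurable_ofReal hlaw.map_eq]
    with x hx
  rw [mul_comm]
  refine mul_le_mul_of_nonneg_right ?_ (hρ.1 x)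
  rw [← ENNReal.ofReal_coe_nnreal, ← ENNReal.ofReal_mul K.coe_nonneg,
    ENNReal.ofReal_le_ofReal_iff (mul_nonneg K.coe_nonneg (hρ₀.1 _))] at hx
  rcases (hρ.1 x).eq_or_lt with h0 | hpos
  · rw [← h0, log_zero]
    positivity
  · have hK : (K : ℝ) ≠ 0 := left_ne_zero_of_mul (hpos.trans_le hx).ne'
    have hG0 : ρ₀ (G x) ≠ 0 := right_ne_zero_of_mul (hpos.trans_le hx).ne'
    have := log_le_log hpos hx
    rw [log_mul hK hG0] at this
    linarith [le_abs_self (log (ρ₀ (G x))), le_abs_self (log K)]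

end Entropy

section ChangeOfVariables

open ProbabilityTheory

variable {T T' : ℝ → ℝ}

lemma map_volume_absolutelyContinuous (hT : ∀ x, HasDerivAt T (T' x) x)
    (hinj : Function.Injective T) (hT0 : ∀ x, T' x ≠ 0) : volume.map T ≪ volume := by
  have hTm : Measurable T := (continuous_iff_continuousAt.2 fun x => (hT x).continuousAt).measurable
  have hT'm : Measurable T' := (funext fun x => (hT x).deriv) ▸ measurable_deriv T
  refine Measure.AbsolutelyContinuous.mk fun N hN hN0 => ?_
  rw [Measure.map_apply hTm hN]
  have jacobian := lintegral_image_eq_lintegral_abs_deriv_mul (hTm hN)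
    (fun x _ => (hT x).hasDerivWithinAt) hinj.injOn 1
  have image_null : volume (T '' (T ⁻¹' N)) = 0 :=
    measure_mono_null (Set.image_preimage_subset T N) hN0
  rw [setLIntegral_measure_zero _ _ image_null, eq_comm,
    setLIntegral_eq_zero_iff (hTm hN) (by fun_prop)] at jacobian
  refine measure_eq_zero_iff_ae_notMem.2 ?_
  filter_upwards [jacobian] with x hx hxN
  simpa [hT0 x] using hx hxN

lemma ae_eq_abs_deriv_mul_comp_of_map_withDensity_eq (hT : ∀ x, HasDerivAt T (T' x) x)
    (hinj : Function.Injective T) {u v : ℝ → ENNReal} (hu : AEMeasurable u) (hv : Measurable v)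
    (huv : (volume.withDensity u).map T = volume.withDensity v) :
    u =ᵐ[volume] fun x => ENNReal.ofReal |T' x| * v (T x) := by
  have hTc : Continuous T := continuous_iff_continuousAt.2 fun x => (hT x).continuousAt
  have hTm : Measurable T := hTc.measurable
  have hT'm : Measurable T' := (funext fun x => (hT x).deriv) ▸ measurable_deriv T
  refine ae_eq_of_forall_setLIntegral_eq_of_sigmaFinite₀ hu (by fun_prop) fun s hs _ => ?_
  have image_measurable : MeasurableSet (T '' s) :=
    hs.image_of_continuousOn_injOn hTc.continuousOn hinj.injOn
  rw [← lintegral_image_eq_lintegral_abs_deriv_mul hs (fun x _ => (hT x).hasDerivWithinAt)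
    hinj.injOn v, ← withDensity_apply v image_measurable, ← huv,
    Measure.map_apply hTm image_measurable, hinj.preimage_image, withDensity_apply u hs]

lemma log_ae_eq_of_hasLaw {ρ f : ℝ → ℝ} (hT : ∀ x, HasDerivAt T (T' x) x)
    (hpos : ∀ x, 0 < T' x) (hρ : IsP2 ρ) (hf : IsP2 f) (hfm : Measurable f)
    (hlaw : HasLaw T (densMeasure f) (densMeasure ρ)) :
    (fun x => log (f (T x))) =ᵐ[densMeasure ρ] fun x => log (ρ x) - log (T' x) := by
  have hinj := (strictMono_of_hasDerivAt_pos hT hpos).injective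
  refine (ae_withDensity_iff' hρ.aemeasurable_ofReal).2 ?_
  filter_upwards [ae_eq_abs_deriv_mul_comp_of_map_withDensity_eq hT hinj hρ.aemeasurable_ofReal
    hfm.ennreal_ofReal hlaw.map_eq] with x hx hx0
  rw [abs_of_pos (hpos x), ← ENNReal.ofReal_mul (hpos x).le] at hx
  have hρ_eq : ρ x = T' x * f (T x) := by
    rwa [ENNReal.ofReal_eq_ofReal_iff (hρ.1 x) (mul_nonneg (hpos x).le (hf.1 _))] at hx
  have hfT : f (T x) ≠ 0 := fun h0 => hx0 (by simp [hρ_eq, h0])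
  rw [hρ_eq, log_mul (hpos x).ne' hfT, add_sub_cancel_left]

lemma HasFiniteEntropy.integral_of_hasLaw {ρ f : ℝ → ℝ} (hρ : IsP2 ρ)
    (hent : HasFiniteEntropy ρ) (hT : ∀ x, HasDerivAt T (T' x) x) (hpos : ∀ x, 0 < T' x)
    (hlog : Integrable (fun x => log (T' x)) (densMeasure ρ)) (hf : IsP2 f) (hfm : Measurable f)
    (hlaw : HasLaw T (densMeasure f) (densMeasure ρ)) :
    ∫ x, f x * log (f x) = (∫ x, ρ x * log (ρ x)) - ∫ x, log (T' x) ∂densMeasure ρ := by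
  rw [← hf.integral_log_densMeasure, ← hρ.integral_log_densMeasure,
    ← integral_sub (hρ.hasFiniteEntropy_iff.1 hent) hlog,
    ← hlaw.integral_comp hfm.log.aestronglyMeasurable]
  exact integral_congr_ae (log_ae_eq_of_hasLaw hT hpos hρ hf hfm hlaw)

end ChangeOfVariables

section MinimizingStep

open ProbabilityTheory

/-- `ρ₁` is obtained from `ρ₀` by one step of the constrained minimizing movement scheme: it
minimizes the objective among the densities with its own first moment. -/
structure IsMinimizingStep (H : ℝ → ℝ) (h : ℝ) (ρ₀ ρ₁ : ℝ → ℝ) : Prop where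
  isP2 : IsP2 ρ₁
  objective_le : ∀ ρ, IsP2 ρ → M1 ρ = M1 ρ₁ → SchemeObjective H h ρ₀ ρ₁ ≤ SchemeObjective H h ρ₀ ρ

/-- The scheme objective without its entropy and normalisation terms. -/
def proximalEnergy (H : ℝ → ℝ) (h : ℝ) (ρ₀ ρ : ℝ → ℝ) : ℝ :=
  W2sq ρ₀ ρ / 2 + h * ∫ x, H x * ρ x

/-- The cost of moving a particle from `x` to `y`, whose mean over an optimal plan is
`proximalEnergy`. -/
def proximalCost (H : ℝ → ℝ) (h x y : ℝ) : ℝ := (y - x) ^ 2 / 2 + h * H y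

variable {H : ℝ → ℝ} {h : ℝ} {ρ₀ ρ₁ : ℝ → ℝ} {L : NNReal}

lemma schemeObjective_eq (H : ℝ → ℝ) (h : ℝ) (ρ₀ ρ : ℝ → ℝ) :
    SchemeObjective H h ρ₀ ρ = proximalEnergy H h ρ₀ ρ + h * (∫ x, ρ x * log (ρ x)) +
      h * log (∫ x, exp (-H x)) := by
  rw [SchemeObjective, FreeEnergy, proximalEnergy]
  ring

lemma proximalCost_add_le (hH : Differentiable ℝ H) (hH' : LipschitzWith L (deriv H))
    (hh : 0 ≤ h) (x y d : ℝ) :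
    proximalCost H h x (y + d) ≤
      proximalCost H h x y + (y - x + h * deriv H y) * d + (1 + h * L) / 2 * d ^ 2 := by
  have taylor := (abs_le.1 (abs_sub_sub_deriv_mul_le hH hH' y (y + d))).2
  rw [add_sub_cancel_left] at taylor
  have := mul_le_mul_of_nonneg_left taylor hh
  unfold proximalCost
  linarith

variable {Ω : Type*} [MeasurableSpace Ω] {P : Measure Ω} [IsFiniteMeasure P] {X Y D : Ω → ℝ}

lemma integrable_proximalCost (hH : Differentiable ℝ H) (hH' : LipschitzWith L (deriv H))
    (hX : MemLp X 2 P) (hY : MemLp Y 2 P) :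
    Integrable (fun ω => proximalCost H h (X ω) (Y ω)) P :=
  ((hY.sub hX).integrable_sq.div_const 2).add
    ((integrable_comp_of_lipschitz_deriv hH hH' hY).const_mul h)

lemma memLp_proximalGradient (hH' : LipschitzWith L (deriv H)) (hX : MemLp X 2 P)
    (hY : MemLp Y 2 P) : MemLp (fun ω => Y ω - X ω + h * deriv H (Y ω)) 2 P :=
  (hY.sub hX).add ((memLp_comp_of_lipschitz hH' hY).const_mul h)

lemma integral_proximalCost_add_le (hH : Differentiable ℝ H) (hH' : LipschitzWith L (deriv H))
    (hh : 0 ≤ h) (hX : MemLp X 2 P) (hY : MemLp Y 2 P) (hD : MemLp D 2 P) :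
    ∫ ω, proximalCost H h (X ω) (Y ω + D ω) ∂P ≤ (∫ ω, proximalCost H h (X ω) (Y ω) ∂P) +
      (∫ ω, (Y ω - X ω + h * deriv H (Y ω)) * D ω ∂P) + (1 + h * L) / 2 * ∫ ω, D ω ^ 2 ∂P := by
  have cost := integrable_proximalCost (h := h) hH hH' hX hY
  have first_order : Integrable (fun ω => (Y ω - X ω + h * deriv H (Y ω)) * D ω) P :=
    (memLp_proximalGradient hH' hX hY).integrable_mul hD
  have linearised : Integrable (fun ω => proximalCost H h (X ω) (Y ω) +
      (Y ω - X ω + h * deriv H (Y ω)) * D ω) P := cost.add first_order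
  have second_order := hD.integrable_sq.const_mul ((1 + h * L) / 2)
  rw [← integral_const_mul, ← integral_add cost first_order,
    ← integral_add linearised second_order]
  exact integral_mono (integrable_proximalCost hH hH' hX (hY.add hD))
    (linearised.add second_order)
    fun ω => proximalCost_add_le hH hH' hh (X ω) (Y ω) (D ω)

lemma integral_proximalCost (hH : Differentiable ℝ H) (hH' : LipschitzWith L (deriv H))
    (h₀ : IsP2 ρ₀) (h₁ : IsP2 ρ₁) (hX : HasLaw X (densMeasure ρ₀) P)
    (hY : HasLaw Y (densMeasure ρ₁) P) :
    ∫ ω, proximalCost H h (X ω) (Y ω) ∂P =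
      (∫ ω, (Y ω - X ω) ^ 2 ∂P) / 2 + h * ∫ x, H x * ρ₁ x := by
  have hX2 := h₀.memLp_of_hasLaw hX
  have hY2 := h₁.memLp_of_hasLaw hY
  rw [← h₁.integral_comp_of_hasLaw hY hH.continuous.aestronglyMeasurable, ← integral_const_mul,
    ← integral_div]
  exact integral_add ((hY2.sub hX2).integrable_sq.div_const 2)
    ((integrable_comp_of_lipschitz_deriv hH hH' hY2).const_mul h)

lemma proximalEnergy_le_integral (hH : Differentiable ℝ H) (hH' : LipschitzWith L (deriv H))
    (h₀ : IsP2 ρ₀) (h₁ : IsP2 ρ₁) (hX : HasLaw X (densMeasure ρ₀) P)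
    (hY : HasLaw Y (densMeasure ρ₁) P) :
    proximalEnergy H h ρ₀ ρ₁ ≤ ∫ ω, proximalCost H h (X ω) (Y ω) ∂P := by
  rw [integral_proximalCost hH hH' h₀ h₁ hX hY, proximalEnergy]
  linarith [W2sq_le_integral hX hY]

lemma IsOptimalPlan.integral_proximalCost {γ : Measure (ℝ × ℝ)} [IsFiniteMeasure γ]
    (hγ : IsOptimalPlan γ ρ₀ ρ₁) (hH : Differentiable ℝ H) (hH' : LipschitzWith L (deriv H))
    (h₀ : IsP2 ρ₀) (h₁ : IsP2 ρ₁) :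
    ∫ p, proximalCost H h p.1 p.2 ∂γ = proximalEnergy H h ρ₀ ρ₁ := by
  rw [_root_.integral_proximalCost hH hH' h₀ h₁ hγ.hasLaw_fst hγ.hasLaw_snd, hγ.integral_eq,
    proximalEnergy]

end MinimizingStep

section EulerLagrange

open ProbabilityTheory

variable {H : ℝ → ℝ} {h : ℝ} {ρ₀ ρ₁ : ℝ → ℝ} {L K : NNReal}

lemma IsMinimizingStep.proximalEnergy_add_le (hstep : IsMinimizingStep H h ρ₀ ρ₁)
    (hH : Differentiable ℝ H) (hH' : LipschitzWith L (deriv H)) (h₀ : IsP2 ρ₀)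
    (hent : HasFiniteEntropy ρ₁) {Ω : Type*} [MeasurableSpace Ω] {P : Measure Ω}
    {X Y : Ω → ℝ} (hX : HasLaw X (densMeasure ρ₀) P) (hY : HasLaw Y (densMeasure ρ₁) P)
    {T T' : ℝ → ℝ} (hT : ∀ x, HasDerivAt T (T' x) x) (hpos : ∀ x, 0 < T' x)
    (hlog : Integrable (fun x => log (T' x)) (densMeasure ρ₁))
    (hT2 : MemLp T 2 (densMeasure ρ₁)) (hmean : ∫ x, T x ∂densMeasure ρ₁ = M1 ρ₁) :
    proximalEnergy H h ρ₀ ρ₁ + h * ∫ x, log (T' x) ∂densMeasure ρ₁ ≤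
      ∫ ω, proximalCost H h (X ω) (T (Y ω)) ∂P := by
  have h₁ := hstep.isP2
  have := h₀.isProbabilityMeasure
  have := h₁.isProbabilityMeasure
  have := hX.isProbabilityMeasure
  have hTm : AEMeasurable T (densMeasure ρ₁) := hT2.aestronglyMeasurable.aemeasurable
  have := Measure.isProbabilityMeasure_map hTm
  have map_ac : (densMeasure ρ₁).map T ≪ volume :=
    ((densMeasure_absolutelyContinuous ρ₁).map
      (continuous_iff_continuousAt.2 fun x => (hT x).continuousAt).measurable).trans
      (map_volume_absolutelyContinuous hT (strictMono_of_hasDerivAt_pos hT hpos).injective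
        fun x => (hpos x).ne')
  obtain ⟨ρ, hρ, hρm, hρ_law⟩ := exists_isP2_densMeasure_eq map_ac
    ((memLp_map_measure_iff aestronglyMeasurable_id hTm).2 hT2)
  have hT_law : HasLaw T (densMeasure ρ) (densMeasure ρ₁) := ⟨hTm, hρ_law.symm⟩
  have same_mean : M1 ρ = M1 ρ₁ := by
    rw [← hmean, ← hρ.integral_id_densMeasure]
    exact (hT_law.integral_comp aestronglyMeasurable_id).symm
  have minimality := hstep.objective_le ρ hρ same_mean
  rw [schemeObjective_eq, schemeObjective_eq,
    hent.integral_of_hasLaw h₁ hT hpos hlog hρ hρm hT_law] at minimality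
  have transport := proximalEnergy_le_integral (h := h) hH hH' h₀ hρ hX (hT_law.comp hY)
  simp only [Function.comp_apply] at transport
  linarith

lemma sub_two_mul_sq_le_log_one_add {u : ℝ} (hu : |u| ≤ 1 / 2) :
    u - 2 * u ^ 2 ≤ log (1 + u) := by
  have hpos : 0 < 1 + u := by linarith [(abs_le.1 hu).1]
  refine le_trans ?_ (one_sub_inv_le_log_of_pos hpos)
  rw [show 1 - (1 + u)⁻¹ = u / (1 + u) by field_simp; ring, le_div_iff₀ hpos]
  nlinarith [mul_nonneg (sq_nonneg u) (show 0 ≤ 1 + 2 * u by linarith [(abs_le.1 hu).1])]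

section LogOneAdd

variable {α : Type*} [MeasurableSpace α] {μ : Measure α} [IsFiniteMeasure μ] {u : α → ℝ}

lemma integrable_log_one_add (hum : AEMeasurable u μ) (hu : ∀ x, |u x| ≤ 1 / 2) :
    Integrable (fun x => log (1 + u x)) μ := by
  refine Integrable.of_mem_Icc (log (1 / 2)) (log 2) (by fun_prop) (ae_of_all _ fun x => ?_)
  have ⟨lower, upper⟩ := abs_le.1 (hu x)
  exact ⟨log_le_log (by norm_num) (by linarith), log_le_log (by linarith) (by linarith)⟩

lemma integral_sub_le_integral_log_one_add (hum : AEMeasurable u μ) (hu : ∀ x, |u x| ≤ 1 / 2) :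
    (∫ x, u x ∂μ) - 2 * ∫ x, u x ^ 2 ∂μ ≤ ∫ x, log (1 + u x) ∂μ := by
  have hu2 : MemLp u 2 μ := .of_bound hum.aestronglyMeasurable _ (ae_of_all _ hu)
  have hu_int := hu2.integrable one_le_two
  have hsq_int := hu2.integrable_sq.const_mul 2
  rw [← integral_const_mul, ← integral_sub hu_int hsq_int]
  exact integral_mono (hu_int.sub hsq_int) (integrable_log_one_add hum hu)
    fun x => sub_two_mul_sq_le_log_one_add (hu x)

end LogOneAdd

lemma eq_zero_of_forall_nonneg_mul_add_mul_sq {a b δ : ℝ} (hδ : 0 < δ)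
    (hnonneg : ∀ s, |s| ≤ δ → 0 ≤ s * a + s ^ 2 * b) : a = 0 := by
  have derivative : HasDerivAt (fun s => s * a + s ^ 2 * b) a 0 :=
    (((hasDerivAt_id (0 : ℝ)).mul_const a).add ((hasDerivAt_pow 2 (0 : ℝ)).mul_const b)).congr_deriv
      (by simp)
  have minimum : IsLocalMin (fun s => s * a + s ^ 2 * b) 0 := by
    filter_upwards [Metric.closedBall_mem_nhds 0 hδ] with s hs
    simpa using hnonneg s (by simpa using hs)
  exact minimum.hasDerivAt_eq_zero derivative

variable {g : ℝ → ℝ}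

lemma IsMinimizingStep.integral_gradient_mul_eq (hstep : IsMinimizingStep H h ρ₀ ρ₁)
    (hH : Differentiable ℝ H) (hH' : LipschitzWith L (deriv H)) (hh : 0 ≤ h) (h₀ : IsP2 ρ₀)
    (hent : HasFiniteEntropy ρ₁) {γ : Measure (ℝ × ℝ)} (hγ : IsOptimalPlan γ ρ₀ ρ₁)
    (hg : Differentiable ℝ g) (hg' : LipschitzWith K g) (hmean : ∫ x, g x ∂densMeasure ρ₁ = 0) :
    ∫ p, (p.2 - p.1 + h * deriv H p.2) * g p.2 ∂γ = h * ∫ x, deriv g x ∂densMeasure ρ₁ := by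
  have h₁ := hstep.isP2
  have := h₀.isProbabilityMeasure
  have := h₁.isProbabilityMeasure
  have := hγ.hasLaw_fst.isProbabilityMeasure
  have hX := h₀.memLp_of_hasLaw hγ.hasLaw_fst
  have hY := h₁.memLp_of_hasLaw hγ.hasLaw_snd
  have hgY := memLp_comp_of_lipschitz hg' hY
  have hg2 : MemLp g 2 (densMeasure ρ₁) := memLp_comp_of_lipschitz hg' h₁.memLp_id
  refine sub_eq_zero.1 (eq_zero_of_forall_nonneg_mul_add_mul_sq
    (δ := 1 / (2 * (K + 1))) (b := (1 + h * L) / 2 * (∫ p, g p.2 ^ 2 ∂γ) +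
      h * (2 * ∫ x, deriv g x ^ 2 ∂densMeasure ρ₁)) (by positivity) fun s hs => ?_)
  have small (x : ℝ) : |s * deriv g x| ≤ 1 / 2 := by
    have deriv_le : |deriv g x| ≤ K := norm_deriv_le_of_lipschitz hg'
    rw [le_div_iff₀ (by positivity)] at hs
    rw [abs_mul]
    nlinarith [abs_nonneg s, mul_le_mul_of_nonneg_left deriv_le (abs_nonneg s)]
  have measurable : AEMeasurable (fun x => s * deriv g x) (densMeasure ρ₁) := by fun_prop
  have same_mean : ∫ x, x + s * g x ∂densMeasure ρ₁ = M1 ρ₁ := by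
    rw [integral_add (h₁.memLp_id.integrable one_le_two) ((hg2.integrable one_le_two).const_mul s),
      integral_const_mul, hmean, mul_zero, add_zero, h₁.integral_id_densMeasure]
  have optimality := hstep.proximalEnergy_add_le hH hH' h₀ hent hγ.hasLaw_fst hγ.hasLaw_snd
    (T := fun x => x + s * g x) (T' := fun x => 1 + s * deriv g x)
    (fun x => (hasDerivAt_id x).add ((hg x).hasDerivAt.const_mul s))
    (fun x => by linarith [(abs_le.1 (small x)).1]) (integrable_log_one_add measurable small)
    (h₁.memLp_id.add (hg2.const_mul s)) same_mean
  have descent := integral_proximalCost_add_le hH hH' hh hX hY (hgY.const_mul s)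
  have entropy_gain := mul_le_mul_of_nonneg_left
    (integral_sub_le_integral_log_one_add measurable small) hh
  rw [← hγ.integral_proximalCost hH hH' h₀ h₁] at optimality
  simp only [mul_left_comm _ s, mul_pow, integral_const_mul]
    at descent entropy_gain
  linarith

/-- The Lagrange multiplier of the mean constraint in one step of the scheme. -/
def stepMultiplier (H : ℝ → ℝ) (h : ℝ) (ρ₀ ρ₁ : ℝ → ℝ) : ℝ :=
  (∫ x, deriv H x * ρ₁ x) + 1 / h * ∫ x, (ρ₁ x - ρ₀ x) * x

lemma integral_sub_mul_eq_integral_comp_sub {f : ℝ → ℝ} (h₀ : IsP2 ρ₀) (h₁ : IsP2 ρ₁)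
    (hf₀ : Integrable f (densMeasure ρ₀)) (hf₁ : Integrable f (densMeasure ρ₁))
    {γ : Measure (ℝ × ℝ)} (hγ : IsOptimalPlan γ ρ₀ ρ₁) :
    ∫ x, (ρ₁ x - ρ₀ x) * f x = ∫ p, (f p.2 - f p.1) ∂γ := by
  have hX := hγ.hasLaw_fst
  have hY := hγ.hasLaw_snd
  have hfX : Integrable (fun p => f p.1) γ :=
    (hX.map_eq.symm ▸ hf₀ : Integrable f (γ.map Prod.fst)).comp_aemeasurable hX.aemeasurable
  have hfY : Integrable (fun p => f p.2) γ :=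
    (hY.map_eq.symm ▸ hf₁ : Integrable f (γ.map Prod.snd)).comp_aemeasurable hY.aemeasurable
  rw [integral_sub hfY hfX, h₁.integral_comp_of_hasLaw hY hf₁.aestronglyMeasurable,
    h₀.integral_comp_of_hasLaw hX hf₀.aestronglyMeasurable,
    ← integral_sub (h₁.integrable_densMeasure_iff.1 hf₁) (h₀.integrable_densMeasure_iff.1 hf₀)]
  exact integral_congr_ae (ae_of_all _ fun x => by ring)

lemma mul_stepMultiplier (hH' : LipschitzWith L (deriv H)) (hh : h ≠ 0) (h₀ : IsP2 ρ₀)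
    (h₁ : IsP2 ρ₁) {γ : Measure (ℝ × ℝ)} (hγ : IsOptimalPlan γ ρ₀ ρ₁) :
    h * stepMultiplier H h ρ₀ ρ₁ = ∫ p, (p.2 - p.1 + h * deriv H p.2) ∂γ := by
  have := h₀.isProbabilityMeasure
  have := h₁.isProbabilityMeasure
  have := hγ.hasLaw_fst.isProbabilityMeasure
  have hX := (h₀.memLp_of_hasLaw hγ.hasLaw_fst).integrable one_le_two
  have hY := h₁.memLp_of_hasLaw hγ.hasLaw_snd
  have displacement : Integrable (fun p => p.2 - p.1) γ := (hY.integrable one_le_two).sub hX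
  rw [integral_add displacement (((memLp_comp_of_lipschitz hH' hY).integrable
      one_le_two).const_mul h), integral_const_mul,
    h₁.integral_comp_of_hasLaw hγ.hasLaw_snd hH'.continuous.aestronglyMeasurable,
    ← integral_sub_mul_eq_integral_comp_sub (f := fun x => x) h₀ h₁
      (h₀.memLp_id.integrable one_le_two) (h₁.memLp_id.integrable one_le_two) hγ, stepMultiplier]
  field_simp
  ring

lemma IsMinimizingStep.integral_gradient_mul_sub_mean_eq (hstep : IsMinimizingStep H h ρ₀ ρ₁)
    (hH : Differentiable ℝ H) (hH' : LipschitzWith L (deriv H)) (hh : 0 ≤ h) (h₀ : IsP2 ρ₀)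
    (hent : HasFiniteEntropy ρ₁) {γ : Measure (ℝ × ℝ)} (hγ : IsOptimalPlan γ ρ₀ ρ₁)
    (hg : Differentiable ℝ g) (hg' : LipschitzWith K g) :
    ∫ p, (p.2 - p.1 + h * deriv H p.2) * (g p.2 - ∫ x, g x ∂densMeasure ρ₁) ∂γ =
      h * ∫ x, deriv g x ∂densMeasure ρ₁ := by
  have := hstep.isP2.isProbabilityMeasure
  have hg_int : Integrable g (densMeasure ρ₁) :=
    (memLp_comp_of_lipschitz hg' hstep.isP2.memLp_id).integrable one_le_two
  have lipschitz : LipschitzWith K fun x => g x - ∫ x, g x ∂densMeasure ρ₁ := by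
    simpa using hg'.sub (LipschitzWith.const (∫ x, g x ∂densMeasure ρ₁))
  have centered : ∫ x, (g x - ∫ x, g x ∂densMeasure ρ₁) ∂densMeasure ρ₁ = 0 := by
    simp [integral_sub hg_int (integrable_const _)]
  simpa using hstep.integral_gradient_mul_eq hH hH' hh h₀ hent hγ (hg.sub_const _) lipschitz
    centered

lemma integral_gradient_mul_sub_mean (hH' : LipschitzWith L (deriv H)) (hh : h ≠ 0)
    (h₀ : IsP2 ρ₀) (h₁ : IsP2 ρ₁) {γ : Measure (ℝ × ℝ)} (hγ : IsOptimalPlan γ ρ₀ ρ₁)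
    (hg : LipschitzWith K g) :
    ∫ p, (p.2 - p.1 + h * deriv H p.2) * (g p.2 - ∫ x, g x ∂densMeasure ρ₁) ∂γ =
      (∫ p, (p.2 - p.1) * g p.2 ∂γ) +
        h * ∫ x, (deriv H x - stepMultiplier H h ρ₀ ρ₁) * g x ∂densMeasure ρ₁ := by
  have := h₀.isProbabilityMeasure
  have := h₁.isProbabilityMeasure
  have := hγ.hasLaw_fst.isProbabilityMeasure
  have hX := h₀.memLp_of_hasLaw hγ.hasLaw_fst
  have hY := h₁.memLp_of_hasLaw hγ.hasLaw_snd
  have hgY := memLp_comp_of_lipschitz hg hY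
  have hg2 := memLp_comp_of_lipschitz hg h₁.memLp_id
  have hH'g : Integrable (fun x => deriv H x * g x) (densMeasure ρ₁) :=
    (memLp_comp_of_lipschitz hH' h₁.memLp_id).integrable_mul hg2
  have gradient := memLp_proximalGradient (h := h) hH' hX hY
  have gradient_mul : Integrable (fun p => (p.2 - p.1 + h * deriv H p.2) * g p.2) γ :=
    gradient.integrable_mul hgY
  have displacement_mul : Integrable (fun p => (p.2 - p.1) * g p.2) γ :=
    (hY.sub hX).integrable_mul hgY
  have drift_mul : Integrable (fun p => h * (deriv H p.2 * g p.2)) γ :=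
    ((memLp_comp_of_lipschitz hH' hY).integrable_mul hgY).const_mul h
  simp only [mul_sub, sub_mul (deriv H _)]
  rw [integral_sub gradient_mul ((gradient.integrable one_le_two).mul_const _), integral_mul_const,
    ← mul_stepMultiplier hH' hh h₀ h₁ hγ,
    integral_sub hH'g ((hg2.integrable one_le_two).const_mul _), integral_const_mul,
    h₁.integral_densMeasure fun x => deriv H x * g x,
    ← h₁.integral_comp_of_hasLaw hγ.hasLaw_snd hH'g.aestronglyMeasurable]
  simp only [add_mul, mul_assoc]
  rw [integral_add displacement_mul drift_mul, integral_const_mul]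
  ring

lemma IsMinimizingStep.integral_euler_lagrange (hstep : IsMinimizingStep H h ρ₀ ρ₁)
    (hH : Differentiable ℝ H) (hH' : LipschitzWith L (deriv H)) (hh : 0 < h) (h₀ : IsP2 ρ₀)
    (hent : HasFiniteEntropy ρ₁) {γ : Measure (ℝ × ℝ)} (hγ : IsOptimalPlan γ ρ₀ ρ₁)
    (hg : Differentiable ℝ g) (hg' : LipschitzWith K g) :
    h * ∫ x, ((deriv H x - stepMultiplier H h ρ₀ ρ₁) * g x - deriv g x) * ρ₁ x =
      -∫ p, (p.2 - p.1) * g p.2 ∂γ := by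
  have h₁ := hstep.isP2
  have := h₁.isProbabilityMeasure
  have drift_mul : Integrable (fun x => (deriv H x - stepMultiplier H h ρ₀ ρ₁) * g x)
      (densMeasure ρ₁) :=
    ((memLp_comp_of_lipschitz hH' h₁.memLp_id).sub (memLp_const _)).integrable_mul
      (memLp_comp_of_lipschitz hg' h₁.memLp_id)
  have deriv_integrable : Integrable (deriv g) (densMeasure ρ₁) :=
    .of_bound (by fun_prop) K (ae_of_all _ fun x => norm_deriv_le_of_lipschitz hg')
  have optimality := hstep.integral_gradient_mul_sub_mean_eq hH hH' hh.le h₀ hent hγ hg hg'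
  rw [integral_gradient_mul_sub_mean hH' hh.ne' h₀ h₁ hγ hg'] at optimality
  rw [← h₁.integral_densMeasure, integral_sub drift_mul deriv_integrable]
  linarith

end EulerLagrange

section FiniteEntropy

open ProbabilityTheory

variable {H : ℝ → ℝ} {h : ℝ} {ρ₀ ρ₁ : ℝ → ℝ} {L K : NNReal}

lemma proximalEnergy_midDensity_le {f g : ℝ → ℝ} (hH : Differentiable ℝ H)
    (hH' : LipschitzWith L (deriv H)) (h₀ : IsP2 ρ₀) (hf : IsP2 f) (hg : IsP2 g) :
    proximalEnergy H h ρ₀ (midDensity f g) ≤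
      (proximalEnergy H h ρ₀ f + proximalEnergy H h ρ₀ g) / 2 := by
  have potential_integrable {r : ℝ → ℝ} (hr : IsP2 r) : Integrable fun x => H x * r x := by
    have := hr.isProbabilityMeasure
    exact hr.integrable_densMeasure_iff.1 (integrable_comp_of_lipschitz_deriv hH hH' hr.memLp_id)
  simp only [proximalEnergy,
    integral_mul_midDensity (potential_integrable hf) (potential_integrable hg)]
  linarith [W2sq_midDensity_le h₀ hf hg]

lemma M1_midDensity {f g : ℝ → ℝ} (hf : IsP2 f) (hg : IsP2 g) :
    M1 (midDensity f g) = (M1 f + M1 g) / 2 := by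
  have integrable {r : ℝ → ℝ} (hr : IsP2 r) : Integrable fun x => x * r x := by
    have := hr.isProbabilityMeasure
    exact hr.integrable_densMeasure_iff.1 (hr.memLp_id.integrable one_le_two)
  exact integral_mul_midDensity (integrable hf) (integrable hg)

/-- Mixing with `ρ₁` makes the entropy of any competitor diverge as well, so that both entropies
take the junk value `0` and drop out of the comparison. -/
lemma IsMinimizingStep.proximalEnergy_le_of_not_hasFiniteEntropy
    (hstep : IsMinimizingStep H h ρ₀ ρ₁) (hent : ¬HasFiniteEntropy ρ₁)
    (hH : Differentiable ℝ H) (hH' : LipschitzWith L (deriv H)) (h₀ : IsP2 ρ₀)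
    {f : ℝ → ℝ} (hf : IsP2 f) (hmean : M1 f = M1 ρ₁) :
    proximalEnergy H h ρ₀ ρ₁ ≤ proximalEnergy H h ρ₀ f := by
  have h₁ := hstep.isP2
  have hmid : ¬HasFiniteEntropy (midDensity f ρ₁) := fun hmid => hent (.of_midDensity hf h₁ hmid)
  have minimality := hstep.objective_le _ (hf.midDensity h₁)
    (by rw [M1_midDensity hf h₁, hmean, add_self_div_two])
  rw [schemeObjective_eq, schemeObjective_eq, integral_undef hent, integral_undef hmid]
    at minimality
  linarith [proximalEnergy_midDensity_le (h := h) hH hH' h₀ hf h₁]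

variable {Ω : Type*} [MeasurableSpace Ω] {P : Measure Ω} [IsProbabilityMeasure P] {X Z : Ω → ℝ}

lemma exists_isP2_hasLaw_add (hZ : MemLp Z 2 P) {ν : Measure ℝ} [IsProbabilityMeasure ν]
    (hν : ν ≪ volume) (hν2 : MemLp id 2 ν) :
    ∃ ρ, IsP2 ρ ∧ HasLaw (fun ω => Z ω.1 + ω.2) (densMeasure ρ) (P.prod ν) := by
  have hsum : MemLp (fun ω => Z ω.1 + ω.2) 2 (P.prod ν) := (hZ.comp_fst ν).add (hν2.comp_snd P)
  have hsum_m := hsum.aestronglyMeasurable.aemeasurable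
  have := Measure.isProbabilityMeasure_map hsum_m
  have sum_law : HasLaw (fun ω => Z ω.1 + ω.2) ((P.map Z).conv ν) (P.prod ν) := by
    have hZm := hZ.aestronglyMeasurable.aemeasurable
    have := Measure.isProbabilityMeasure_map hZm
    exact (indepFun_prod₀ hZm aemeasurable_id).hasLaw_fun_add
      ((HasLaw.mk hZm rfl).fun_comp measurePreserving_fst.hasLaw) measurePreserving_snd.hasLaw
  obtain ⟨ρ, hρ, -, hρ_law⟩ := exists_isP2_densMeasure_eq
    (sum_law.map_eq ▸ Measure.conv_absolutelyContinuous hν)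
    ((memLp_map_measure_iff aestronglyMeasurable_id hsum_m).2 hsum)
  exact ⟨ρ, hρ, hsum_m, hρ_law.symm⟩

lemma IsMinimizingStep.proximalEnergy_le_integral_add_of_not_hasFiniteEntropy
    (hstep : IsMinimizingStep H h ρ₀ ρ₁) (hent : ¬HasFiniteEntropy ρ₁)
    (hH : Differentiable ℝ H) (hH' : LipschitzWith L (deriv H)) (hh : 0 ≤ h) (h₀ : IsP2 ρ₀)
    (hX : HasLaw X (densMeasure ρ₀) P) (hZ : MemLp Z 2 P) (hmean : ∫ ω, Z ω ∂P = M1 ρ₁)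
    {ν : Measure ℝ} [IsProbabilityMeasure ν] (hν : ν ≪ volume) (hν2 : MemLp id 2 ν)
    (hν0 : ∫ x, x ∂ν = 0) :
    proximalEnergy H h ρ₀ ρ₁ ≤
      (∫ ω, proximalCost H h (X ω) (Z ω) ∂P) + (1 + h * L) / 2 * ∫ x, x ^ 2 ∂ν := by
  obtain ⟨ρ, hρ, hsum⟩ := exists_isP2_hasLaw_add hZ hν hν2
  have hX' : HasLaw (fun ω : Ω × ℝ => X ω.1) (densMeasure ρ₀) (P.prod ν) :=
    hX.fun_comp measurePreserving_fst.hasLaw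
  have hX2 := h₀.memLp_of_hasLaw hX
  have hnoise : MemLp (fun ω : Ω × ℝ => ω.2) 2 (P.prod ν) := hν2.comp_snd P
  have same_mean : M1 ρ = M1 ρ₁ := by
    rw [← hρ.integral_id_densMeasure, ← hsum.integral_comp (f := fun x => x) (by fun_prop)]
    simp only [Function.comp_apply]
    rw [integral_add ((hZ.comp_fst ν).integrable one_le_two) (hnoise.integrable one_le_two),
      integral_fun_fst Z, integral_fun_snd fun x : ℝ => x, hν0, hmean]
    simp
  calc proximalEnergy H h ρ₀ ρ₁ ≤ proximalEnergy H h ρ₀ ρ :=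
        hstep.proximalEnergy_le_of_not_hasFiniteEntropy hent hH hH' h₀ hρ same_mean
    _ ≤ ∫ ω, proximalCost H h (X ω.1) (Z ω.1 + ω.2) ∂P.prod ν :=
        proximalEnergy_le_integral hH hH' h₀ hρ hX' hsum
    _ ≤ (∫ ω, proximalCost H h (X ω.1) (Z ω.1) ∂P.prod ν) +
          (∫ ω, (Z ω.1 - X ω.1 + h * deriv H (Z ω.1)) * ω.2 ∂P.prod ν) +
          (1 + h * L) / 2 * ∫ ω, ω.2 ^ 2 ∂P.prod ν :=
        integral_proximalCost_add_le hH hH' hh (hX2.comp_fst ν) (hZ.comp_fst ν) hnoise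
    _ = (∫ ω, proximalCost H h (X ω) (Z ω) ∂P) + (1 + h * L) / 2 * ∫ x, x ^ 2 ∂ν := by
        rw [integral_prod_mul (fun ω => Z ω - X ω + h * deriv H (Z ω)) fun x => x, hν0,
          integral_fun_fst fun ω => proximalCost H h (X ω) (Z ω),
          integral_fun_snd fun x : ℝ => x ^ 2]
        simp

/-- The density of a competitor with atoms is restored by adding a small independent Gaussian. -/
lemma IsMinimizingStep.proximalEnergy_le_integral_of_not_hasFiniteEntropy
    (hstep : IsMinimizingStep H h ρ₀ ρ₁) (hent : ¬HasFiniteEntropy ρ₁)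
    (hH : Differentiable ℝ H) (hH' : LipschitzWith L (deriv H)) (hh : 0 ≤ h) (h₀ : IsP2 ρ₀)
    (hX : HasLaw X (densMeasure ρ₀) P) (hZ : MemLp Z 2 P) (hmean : ∫ ω, Z ω ∂P = M1 ρ₁) :
    proximalEnergy H h ρ₀ ρ₁ ≤ ∫ ω, proximalCost H h (X ω) (Z ω) ∂P := by
  refine le_of_forall_pos_le_add fun ε hε => ?_
  have variance_pos : 0 < 2 * ε / (1 + h * L) := by positivity
  set v : NNReal := (2 * ε / (1 + h * L)).toNNReal with hv
  have v_ne_zero : v ≠ 0 := (Real.toNNReal_pos.2 variance_pos).ne'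
  have second_moment : ∫ x, x ^ 2 ∂gaussianReal 0 v = v := by
    rw [← variance_id_gaussianReal (μ := 0), variance_of_integral_eq_zero (by fun_prop) (by simp)]
    rfl
  refine (hstep.proximalEnergy_le_integral_add_of_not_hasFiniteEntropy hent hH hH' hh h₀ hX hZ hmean
    (gaussianReal_absolutelyContinuous 0 v_ne_zero) (memLp_id_gaussianReal 2)
    integral_id_gaussianReal).trans_eq ?_
  rw [second_moment, hv, Real.coe_toNNReal _ variance_pos.le]
  field_simp

lemma IsMinimizingStep.integral_sq_residual_nonpos
    (hstep : IsMinimizingStep H h ρ₀ ρ₁) (hent : ¬HasFiniteEntropy ρ₁)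
    (hH : Differentiable ℝ H) (hH' : LipschitzWith L (deriv H)) (hh : 0 ≤ h) (h₀ : IsP2 ρ₀)
    {γ : Measure (ℝ × ℝ)} (hγ : IsOptimalPlan γ ρ₀ ρ₁) {R : ℝ × ℝ → ℝ} (hR : MemLp R 2 γ)
    (hR_mean : ∫ p, R p ∂γ = 0)
    (hR_gradient : ∫ p, (p.2 - p.1 + h * deriv H p.2) * R p ∂γ = ∫ p, R p ^ 2 ∂γ) :
    ∫ p, R p ^ 2 ∂γ ≤ 0 := by
  have h₁ := hstep.isP2
  have := h₀.isProbabilityMeasure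
  have := hγ.hasLaw_fst.isProbabilityMeasure
  have hX := h₀.memLp_of_hasLaw hγ.hasLaw_fst
  have hY := h₁.memLp_of_hasLaw hγ.hasLaw_snd
  set s : ℝ := -(1 / (1 + h * L)) with hs
  have same_mean : ∫ p, (p.2 + s * R p) ∂γ = M1 ρ₁ := by
    rw [integral_add (hY.integrable one_le_two) ((hR.integrable one_le_two).const_mul s),
      integral_const_mul, hR_mean, mul_zero, add_zero]
    exact h₁.integral_comp_of_hasLaw hγ.hasLaw_snd (f := fun x => x) (by fun_prop)
  have minimality := hstep.proximalEnergy_le_integral_of_not_hasFiniteEntropy hent hH hH' hh h₀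
    hγ.hasLaw_fst (hY.add (hR.const_mul s)) same_mean
  have descent := integral_proximalCost_add_le hH hH' hh hX hY (hR.const_mul s)
  rw [← hγ.integral_proximalCost hH hH' h₀ h₁] at minimality
  simp only [mul_left_comm _ s, mul_pow, integral_const_mul, hR_gradient] at descent
  have decrease : s * (∫ p, R p ^ 2 ∂γ) + (1 + h * L) / 2 * (s ^ 2 * ∫ p, R p ^ 2 ∂γ) =
      -(1 / (2 * (1 + h * L))) * ∫ p, R p ^ 2 ∂γ := by
    rw [hs]
    field_simp
    ring
  have step_pos : 0 < 1 / (2 * (1 + h * L)) := by positivity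
  refine nonpos_of_mul_nonpos_right (?_ : 1 / (2 * (1 + h * L)) * _ ≤ 0) step_pos
  linarith [minimality.trans descent]

lemma IsMinimizingStep.ae_eq_of_not_hasFiniteEntropy
    (hstep : IsMinimizingStep H h ρ₀ ρ₁) (hent : ¬HasFiniteEntropy ρ₁)
    (hH : Differentiable ℝ H) (hH' : LipschitzWith L (deriv H)) (hh : 0 ≤ h) (h₀ : IsP2 ρ₀)
    {γ : Measure (ℝ × ℝ)} (hγ : IsOptimalPlan γ ρ₀ ρ₁) :
    ∃ c, ∀ᵐ p ∂γ, p.2 + h * deriv H p.2 - c = p.1 := by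
  have := h₀.isProbabilityMeasure
  have := hγ.hasLaw_fst.isProbabilityMeasure
  have gradient : MemLp (fun p => p.2 - p.1 + h * deriv H p.2) 2 γ :=
    memLp_proximalGradient hH' (h₀.memLp_of_hasLaw hγ.hasLaw_fst)
      (hstep.isP2.memLp_of_hasLaw hγ.hasLaw_snd)
  set c := ∫ p, (p.2 - p.1 + h * deriv H p.2) ∂γ with hc
  set R : ℝ × ℝ → ℝ := fun p => p.2 - p.1 + h * deriv H p.2 - c with hR
  have residual : MemLp R 2 γ := gradient.sub (memLp_const c)
  have residual_mean : ∫ p, R p ∂γ = 0 := by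
    simp [hR, integral_sub (gradient.integrable one_le_two) (integrable_const c), ← hc]
  have residual_gradient :
      ∫ p, (p.2 - p.1 + h * deriv H p.2) * R p ∂γ = ∫ p, R p ^ 2 ∂γ :=
    calc ∫ p, (p.2 - p.1 + h * deriv H p.2) * R p ∂γ = ∫ p, (R p ^ 2 + c * R p) ∂γ :=
          integral_congr_ae (ae_of_all _ fun p => by simp only [hR]; ring)
      _ = ∫ p, R p ^ 2 ∂γ := by
          rw [integral_add residual.integrable_sq ((residual.integrable one_le_two).const_mul c),
            integral_const_mul, residual_mean, mul_zero, add_zero]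
  have sq_eq_zero : (fun p => R p ^ 2) =ᵐ[γ] 0 :=
    (integral_eq_zero_iff_of_nonneg (fun p => sq_nonneg _) residual.integrable_sq).1
      ((hstep.integral_sq_residual_nonpos hent hH hH' hh h₀ hγ residual residual_mean
        residual_gradient).antisymm (integral_nonneg fun p => sq_nonneg _))
  refine ⟨c, ?_⟩
  filter_upwards [sq_eq_zero] with p hp
  linarith [pow_eq_zero_iff two_ne_zero |>.1 hp]

lemma lipschitzWith_id_add_mul_sub (hH' : LipschitzWith L (deriv H)) (h c : ℝ) :
    LipschitzWith (1 + ‖h‖₊ * L) fun y => y + h * deriv H y - c := by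
  simpa using (LipschitzWith.id.add ((lipschitzWith_smul h).comp hH')).sub (LipschitzWith.const c)

lemma IsMinimizingStep.hasFiniteEntropy (hstep : IsMinimizingStep H h ρ₀ ρ₁)
    (hH : Differentiable ℝ H) (hH' : LipschitzWith L (deriv H)) (hh : 0 ≤ h) (h₀ : IsP2 ρ₀)
    (hent : HasFiniteEntropy ρ₀) : HasFiniteEntropy ρ₁ := by
  by_contra hent₁
  obtain ⟨γ, hγ⟩ := exists_isOptimalPlan h₀ hstep.isP2
  obtain ⟨c, hc⟩ := hstep.ae_eq_of_not_hasFiniteEntropy hent₁ hH hH' hh h₀ hγ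
  have lipschitz := lipschitzWith_id_add_mul_sub hH' h c
  have inverse_law : HasLaw (fun y => y + h * deriv H y - c) (densMeasure ρ₀) (densMeasure ρ₁) := by
    refine ⟨lipschitz.continuous.aemeasurable, ?_⟩
    rw [← hγ.hasLaw_snd.map_eq, ← hγ.hasLaw_fst.map_eq,
      Measure.map_map lipschitz.continuous.measurable measurable_snd]
    exact Measure.map_congr hc
  exact hent₁ (.of_hasLaw_lipschitz lipschitz hstep.isP2 h₀ inverse_law hent)

end FiniteEntropy

section WeakFormulation

variable {H : ℝ → ℝ} {h : ℝ} {ρ₀ ρ₁ : ℝ → ℝ} {L K : NNReal} {ζ : ℝ → ℝ}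

lemma IsOptimalPlan.abs_integral_taylor_remainder_le {γ : Measure (ℝ × ℝ)}
    (hγ : IsOptimalPlan γ ρ₀ ρ₁) (h₀ : IsP2 ρ₀) (h₁ : IsP2 ρ₁) (hζ : Differentiable ℝ ζ)
    (hζ' : LipschitzWith K (deriv ζ)) :
    |(∫ p, (ζ p.2 - ζ p.1) ∂γ) - ∫ p, (p.2 - p.1) * deriv ζ p.2 ∂γ| ≤ K / 2 * W2sq ρ₀ ρ₁ := by
  have := h₀.isProbabilityMeasure
  have := hγ.hasLaw_fst.isProbabilityMeasure
  have hX := h₀.memLp_of_hasLaw hγ.hasLaw_fst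
  have hY := h₁.memLp_of_hasLaw hγ.hasLaw_snd
  have increment : Integrable (fun p => ζ p.2 - ζ p.1) γ :=
    (integrable_comp_of_lipschitz_deriv hζ hζ' hY).sub
      (integrable_comp_of_lipschitz_deriv hζ hζ' hX)
  have linear : Integrable (fun p => (p.2 - p.1) * deriv ζ p.2) γ :=
    (hY.sub hX).integrable_mul (memLp_comp_of_lipschitz hζ' hY)
  have quadratic : Integrable (fun p => (K / 2 : ℝ) * (p.2 - p.1) ^ 2) γ :=
    (hY.sub hX).integrable_sq.const_mul _
  rw [← integral_sub increment linear, ← hγ.integral_eq, ← integral_const_mul,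
    ← Real.norm_eq_abs]
  refine norm_integral_le_of_norm_le quadratic (ae_of_all _ fun p => ?_)
  have taylor := abs_sub_sub_deriv_mul_le hζ hζ' p.2 p.1
  rw [Real.norm_eq_abs, abs_sub_comm]
  convert taylor using 2 <;> ring

lemma IsMinimizingStep.abs_weak_formulation_le (hstep : IsMinimizingStep H h ρ₀ ρ₁)
    (hH : Differentiable ℝ H) (hH' : LipschitzWith L (deriv H)) (hh : 0 < h) (h₀ : IsP2 ρ₀)
    (hent : HasFiniteEntropy ρ₁) (hζ : Differentiable ℝ ζ) (hζ' : Differentiable ℝ (deriv ζ))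
    (hK : LipschitzWith K (deriv ζ)) :
    |(∫ x, (ρ₁ x - ρ₀ x) / h * ζ x) +
        ∫ x, ((deriv H x - stepMultiplier H h ρ₀ ρ₁) * deriv ζ x - deriv (deriv ζ) x) * ρ₁ x| ≤
      K / 2 * (1 / h * W2sq ρ₀ ρ₁) := by
  have h₁ := hstep.isP2
  have := h₀.isProbabilityMeasure
  have := h₁.isProbabilityMeasure
  obtain ⟨γ, hγ⟩ := exists_isOptimalPlan h₀ h₁
  have time_difference : ∫ x, (ρ₁ x - ρ₀ x) / h * ζ x = (∫ p, (ζ p.2 - ζ p.1) ∂γ) / h := by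
    rw [← integral_sub_mul_eq_integral_comp_sub h₀ h₁
      (integrable_comp_of_lipschitz_deriv hζ hK h₀.memLp_id)
      (integrable_comp_of_lipschitz_deriv hζ hK h₁.memLp_id) hγ, ← integral_div]
    simp only [div_mul_eq_mul_div]
  have euler_lagrange :
      ∫ x, ((deriv H x - stepMultiplier H h ρ₀ ρ₁) * deriv ζ x - deriv (deriv ζ) x) * ρ₁ x =
        -(∫ p, (p.2 - p.1) * deriv ζ p.2 ∂γ) / h := by
    rw [eq_div_iff hh.ne', mul_comm]
    exact hstep.integral_euler_lagrange hH hH' hh h₀ hent hγ hζ' hK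
  rw [time_difference, euler_lagrange, ← add_div, ← sub_eq_add_neg, abs_div, abs_of_pos hh,
    mul_left_comm, one_div, inv_mul_eq_div]
  exact div_le_div_of_nonneg_right (hγ.abs_integral_taylor_remainder_le h₀ h₁ hζ hK) hh.le

namespace SolvesScheme

variable {l : ℝ → ℝ} {ρ : ℝ → ℝ} {ρs : ℕ → ℝ → ℝ}

lemma isMinimizingStep (hs : SolvesScheme H l h ρ ρs) {k : ℕ} (hk : 1 ≤ k) :
    IsMinimizingStep H h (ρs (k - 1)) (ρs k) := by
  obtain ⟨⟨isP2, mean_eq⟩, objective_le⟩ := hs.2 k hk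
  exact ⟨isP2, fun r hr hmean => objective_le r ⟨hr, hmean.trans mean_eq⟩⟩

lemma isP2_and_hasFiniteEntropy (hs : SolvesScheme H l h ρ ρs) (hH : Differentiable ℝ H)
    (hH' : LipschitzWith L (deriv H)) (hh : 0 ≤ h) (hρ : IsP2 ρ) (hent : HasFiniteEntropy ρ)
    (k : ℕ) : IsP2 (ρs k) ∧ HasFiniteEntropy (ρs k) := by
  induction k with
  | zero => exact hs.1.symm ▸ ⟨hρ, hent⟩
  | succ k ih =>
    have hstep := hs.isMinimizingStep (Nat.le_add_left 1 k)
    exact ⟨hstep.isP2, hstep.hasFiniteEntropy hH hH' hh ih.1 ih.2⟩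

end SolvesScheme

namespace GrowthAssumptions

variable {C : ℝ}

lemma differentiable (hH : GrowthAssumptions H C) : Differentiable ℝ H :=
  hH.1.differentiable (by norm_num)

lemma lipschitzWith_deriv (hH : GrowthAssumptions H C) : LipschitzWith C.toNNReal (deriv H) := by
  obtain ⟨smooth, -, hC, -, -, deriv2_le, -⟩ := hH
  refine lipschitzWith_of_nnnorm_deriv_le
    ((smooth.of_le (by norm_num) : ContDiff ℝ 2 H).differentiable_deriv_two) fun x => ?_
  rw [← NNReal.coe_le_coe, Real.coe_toNNReal _ hC.le]
  exact deriv2_le x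

end GrowthAssumptions

lemma bddAbove_range_abs_deriv_deriv (hζ : ContDiff ℝ 2 ζ) (hsupport : HasCompactSupport ζ) :
    BddAbove (Set.range fun x => |deriv (deriv ζ) x|) := by
  obtain ⟨B, hB⟩ := hsupport.deriv.deriv.exists_bound_of_continuous
    (((contDiff_succ_iff_deriv (n := 1)).1 hζ).2.2.continuous_deriv le_rfl)
  exact ⟨B, Set.forall_mem_range.2 hB⟩

end WeakFormulation

theorem discrete_weak_formulation_general {H : ℝ → ℝ} {L : NNReal} (hH : Differentiable ℝ H)
    (hH' : LipschitzWith L (deriv H)) {l : ℝ → ℝ} {h : ℝ} (hh : 0 < h) {ρ0 : ℝ → ℝ}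
    (hρ0 : IsP2 ρ0) (hent : HasFiniteEntropy ρ0) {ρs : ℕ → ℝ → ℝ}
    (hscheme : SolvesScheme H l h ρ0 ρs) {ζ : ℝ → ℝ} (hζ : Differentiable ℝ ζ)
    (hζ' : Differentiable ℝ (deriv ζ)) (hζ'' : BddAbove (Set.range fun x => |deriv (deriv ζ) x|))
    {k : ℕ} (hk : 1 ≤ k) :
    |(∫ x, (ρs k x - ρs (k - 1) x) / h * ζ x) +
        ∫ x, ((deriv H x - discreteSigma H h ρs k) * deriv ζ x - deriv (deriv ζ) x) * ρs k x| ≤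
      (⨆ x : ℝ, |deriv (deriv ζ) x|) / 2 * (1 / h * W2sq (ρs (k - 1)) (ρs k)) := by
  lift (⨆ x : ℝ, |deriv (deriv ζ) x|) to NNReal using Real.iSup_nonneg fun _ => abs_nonneg _
    with K hK
  have lipschitz : LipschitzWith K (deriv ζ) :=
    lipschitzWith_of_nnnorm_deriv_le hζ' fun x => by
      rw [← NNReal.coe_le_coe, hK]
      exact le_ciSup hζ'' x
  have regular := hscheme.isP2_and_hasFiniteEntropy hH hH' hh.le hρ0 hent
  exact (hscheme.isMinimizingStep hk).abs_weak_formulation_le hH hH' hh (regular (k - 1)).1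
    (regular k).2 hζ hζ' lipschitz

/-- Lemma 3.6, time-discrete approximation of the weak formulation. -/
theorem discrete_weak_formulation
    (H : ℝ → ℝ) (C : ℝ) (hH : GrowthAssumptions H C)
    (l : ℝ → ℝ) (hl : LipschitzBoundedOnNonneg l)
    (h : ℝ) (hh : 0 < h)
    (ρ0 : ℝ → ℝ) (hρ0 : ρ0 ∈ Mset (l 0)) (hF0 : FiniteFreeEnergy H ρ0)
    (ρs : ℕ → ℝ → ℝ) (hscheme : SolvesScheme H l h ρ0 ρs) :
    ∀ ζ : ℝ → ℝ, ContDiff ℝ (⊤ : ℕ∞) ζ → HasCompactSupport ζ →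
      ∀ k : ℕ, 1 ≤ k →
        |(∫ x, (ρs k x - ρs (k - 1) x) / h * ζ x)
            + ∫ x, ((deriv H x - discreteSigma H h ρs k) * deriv ζ x
                - deriv (deriv ζ) x) * ρs k x|
          ≤ (⨆ x : ℝ, |deriv (deriv ζ) x|) / 2 * ((1 / h) * W2sq (ρs (k - 1)) (ρs k)) :=
  fun _ hζ hsupport _ hk =>
    discrete_weak_formulation_general hH.differentiable hH.lipschitzWith_deriv hh hρ0.1 hF0.1
      hscheme (hζ.differentiable (by simp)) ((contDiff_infty.1 hζ 2).differentiable_deriv_two)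
      (bddAbove_range_abs_deriv_deriv (contDiff_infty.1 hζ 2) hsupport) hk
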